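/- For every δ ∈ (0,1) and d ≥ 2, the pushforward map μ ↦ ∧²_*μ is continuous from (𝒫^δ_slog(SL_d(𝕂)), W^δ_slog) to (𝒫^1_log(SL_{d(d−1)/2}(𝕂)), W^1_log). -/

import Mathlib

/-!
Write `g(t) = log (1 + t)`. It dominates `log^{1⋆}` (`logpStar_le`), it is subadditive and satisfies
`g(x y) ≤ g(x) + g(y)`, and `g ≤ c · slog^δ` on `[0, ∞)` for some constant `c`
(`exists_log_le_slog`): for large `t` because `exp (u ^ δ)` outgrows every linear function of
`u = log t`, and near `0` by concavity of `slog^δ`.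

Since `∧²` is quadratic, `‖∧²A - ∧²B‖ ≤ 2 ‖A - B‖² + 4 ‖B‖ ‖A - B‖` (`norm_wedge2_sub_le`).
Splitting according to whether `‖B‖ ≤ n` or not gives (`logpStar_wedge2_sub_le`)
`log^{1⋆} ‖∧²A - ∧²B‖ ≤ K_n · slog^δ ‖A - B‖ + 4 · 1_{‖B‖ > n} g(‖B‖)`.
Integrating this against a coupling of `ν` and `μ`, and pushing the coupling forward by `∧² × ∧²`,
bounds the `W¹_log` distance of the pushforwards by `K_n · W^δ_slog(ν, μ)` plus a tail that involves
only `μ`. The tail tends to `0` as `n → ∞` because `g(‖·‖)` is `μ`-integrable, and for fixed `n` the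
first term tends to `0` along the sequence.
-/

open MeasureTheory Filter Topology Matrix
open scoped ENNReal

noncomputable section

namespace RMP

/-- The function `log^{p⋆}`: `(p/e)^p · t` for `t < e^p` and `(log t)^p` for `t ≥ e^p`. -/
def logpStar (p t : ℝ) : ℝ :=
  if t < Real.exp p then (p / Real.exp 1) ^ p * t else Real.log t ^ p

/-- A valid choice of semi-logarithm function `slog^δ`: concave and increasing on `[0,∞)`,
vanishing at `0`, and agreeing with `t ↦ exp((log t)^δ)` for all large `t`. -/
structure IsSlog (δ : ℝ) (s : ℝ → ℝ) : Prop where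
  concave : ConcaveOn ℝ (Set.Ici 0) s
  mono : MonotoneOn s (Set.Ici 0)
  zero : s 0 = 0
  eventually_eq : ∃ T : ℝ, ∀ t ≥ T, s t = Real.exp (Real.log t ^ δ)

/-- The infimum of the cost of transporting `μ` to `ν` over all couplings. -/
def transportCost {G : Type*} [MeasurableSpace G] (c : G → G → ℝ)
    (μ ν : Measure G) : ℝ≥0∞ :=
  ⨅ (η : Measure (G × G)) (_ : η.map Prod.fst = μ ∧ η.map Prod.snd = ν),
    ∫⁻ q, ENNReal.ofReal (c q.1 q.2) ∂η

/-- Sequential compactness of a family of measures with respect to a Wasserstein-type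
distance functional `W`; for metric topologies this is equivalent to compactness. -/
def SeqCompactIn {G : Type*} [MeasurableSpace G]
    (W : Measure G → Measure G → ℝ≥0∞) (K : Set (Measure G)) : Prop :=
  ∀ u : ℕ → Measure G, (∀ n, u n ∈ K) →
    ∃ μ ∈ K, ∃ φ : ℕ → ℕ, StrictMono φ ∧
      Tendsto (fun k => W (u (φ k)) μ) atTop (nhds 0)

variable {𝕂 : Type*} [NontriviallyNormedField 𝕂] {d : ℕ}

attribute [local instance] Matrix.normedAddCommGroup

local instance slTop : TopologicalSpace (SpecialLinearGroup (Fin d) 𝕂) :=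
  inferInstanceAs (TopologicalSpace {A : Matrix (Fin d) (Fin d) 𝕂 // A.det = 1})

local instance matMS {ι : Type*} [Fintype ι] : MeasurableSpace (Matrix ι ι 𝕂) := borel _
local instance slMS : MeasurableSpace (SpecialLinearGroup (Fin d) 𝕂) := borel _

/-- The (topological) support of a measure. -/
def msupport {G : Type*} [TopologicalSpace G] [MeasurableSpace G] (μ : Measure G) : Set G :=
  {g | ∀ U : Set G, IsOpen U → g ∈ U → μ U ≠ 0}

/-- `μ` is strongly irreducible: no finite union of nontrivial proper subspaces of `𝕂^d`
is invariant under every element of the group generated by the support of `μ`. -/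
def StronglyIrreducible (μ : Measure (SpecialLinearGroup (Fin d) 𝕂)) : Prop :=
  ¬ ∃ S : Finset (Submodule 𝕂 (Fin d → 𝕂)), S.Nonempty ∧
      (∀ V ∈ S, V ≠ ⊥ ∧ V ≠ ⊤) ∧
      ∀ g ∈ Subgroup.closure (msupport μ),
        ∀ v ∈ ⋃ V ∈ S, (V : Set (Fin d → 𝕂)),
          (g : Matrix (Fin d) (Fin d) 𝕂).mulVec v ∈ ⋃ V ∈ S, (V : Set (Fin d → 𝕂))

/-- `μ` is contracting: the group generated by its support contains a sequence which,
after normalization by scalars, converges to a rank one matrix. -/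
def Contracting (μ : Measure (SpecialLinearGroup (Fin d) 𝕂)) : Prop :=
  ∃ g : ℕ → SpecialLinearGroup (Fin d) 𝕂,
    (∀ n, g n ∈ Subgroup.closure (msupport μ)) ∧
    ∃ (c : ℕ → 𝕂) (L : Matrix (Fin d) (Fin d) 𝕂), L.rank = 1 ∧
      Tendsto (fun n => ‖c n • ((g n : Matrix (Fin d) (Fin d) 𝕂)) - L‖) atTop (nhds 0)

/-- The product `M_n ⋯ M_1` of the random matrices, as a function of `(M_1, …, M_n)`. -/
def prodTM {n : ℕ} (ω : Fin n → SpecialLinearGroup (Fin d) 𝕂) :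
    SpecialLinearGroup (Fin d) 𝕂 :=
  (List.ofFn ω).reverse.prod

/-- The top Lyapunov exponent `λ₁(μ) = lim (1/n) E[log ‖A_n^μ‖]`. -/
def lyap1 (μ : Measure (SpecialLinearGroup (Fin d) 𝕂)) : ℝ :=
  limsup (fun n : ℕ =>
    (n : ℝ)⁻¹ * ∫ ω, Real.log ‖((prodTM ω : SpecialLinearGroup (Fin d) 𝕂) :
        Matrix (Fin d) (Fin d) 𝕂)‖ ∂(Measure.pi fun _ : Fin n => μ)) atTop

/-- The index type of size `d(d-1)/2` for the second exterior power. -/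
abbrev PairIdx (d : ℕ) := {q : Fin d × Fin d // q.1 < q.2}

/-- The second exterior power (second compound matrix) of a matrix, as a matrix indexed by
the `d(d-1)/2` increasing pairs; its entries are the `2 × 2` minors. -/
def wedge2 (M : Matrix (Fin d) (Fin d) 𝕂) : Matrix (PairIdx d) (PairIdx d) 𝕂 :=
  fun p q => M p.1.1 q.1.1 * M p.1.2 q.1.2 - M p.1.1 q.1.2 * M p.1.2 q.1.1

/-- The sum of the two top Lyapunov exponents,
`λ₁(μ) + λ₂(μ) = lim (1/n) E[log ‖∧² A_n^μ‖]`. -/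
def lyap12 (μ : Measure (SpecialLinearGroup (Fin d) 𝕂)) : ℝ :=
  limsup (fun n : ℕ =>
    (n : ℝ)⁻¹ * ∫ ω, Real.log ‖wedge2 (((prodTM ω : SpecialLinearGroup (Fin d) 𝕂) :
        Matrix (Fin d) (Fin d) 𝕂))‖ ∂(Measure.pi fun _ : Fin n => μ)) atTop

/-- The second Lyapunov exponent. -/
def lyap2 (μ : Measure (SpecialLinearGroup (Fin d) 𝕂)) : ℝ := lyap12 μ - lyap1 μ

/-- Membership in `𝒫^p_log(SL_d(𝕂))`. -/
def MemPlog (p : ℝ) (μ : Measure (SpecialLinearGroup (Fin d) 𝕂)) : Prop :=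
  IsProbabilityMeasure μ ∧
    ∫⁻ M, ENNReal.ofReal (logpStar p ‖(M : Matrix (Fin d) (Fin d) 𝕂)‖) ∂μ < ⊤

/-- The logarithmic Wasserstein distance `W^p_log`. -/
def Wlog (p : ℝ) (μ ν : Measure (SpecialLinearGroup (Fin d) 𝕂)) : ℝ≥0∞ :=
  transportCost (fun A B : SpecialLinearGroup (Fin d) 𝕂 =>
    logpStar p ‖((A : Matrix (Fin d) (Fin d) 𝕂)) - (B : Matrix (Fin d) (Fin d) 𝕂)‖) μ ν

/-- Membership in `𝒫^δ_slog(SL_d(𝕂))`, for a given semi-logarithm function `s = slog^δ`. -/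
def MemPslog (s : ℝ → ℝ) (μ : Measure (SpecialLinearGroup (Fin d) 𝕂)) : Prop :=
  IsProbabilityMeasure μ ∧
    ∫⁻ M, ENNReal.ofReal (s ‖(M : Matrix (Fin d) (Fin d) 𝕂)‖) ∂μ < ⊤

/-- The semi-logarithmic Wasserstein distance `W^δ_slog` associated to `s = slog^δ`. -/
def Wslog (s : ℝ → ℝ) (μ ν : Measure (SpecialLinearGroup (Fin d) 𝕂)) : ℝ≥0∞ :=
  transportCost (fun A B : SpecialLinearGroup (Fin d) 𝕂 =>
    s ‖((A : Matrix (Fin d) (Fin d) 𝕂)) - (B : Matrix (Fin d) (Fin d) 𝕂)‖) μ ν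

/-- Membership in `𝒫^α(SL_d(𝕂))`: a finite moment of order `α`. -/
def MemPalpha (α : ℝ) (μ : Measure (SpecialLinearGroup (Fin d) 𝕂)) : Prop :=
  IsProbabilityMeasure μ ∧
    ∫⁻ M, ENNReal.ofReal (‖(M : Matrix (Fin d) (Fin d) 𝕂)‖ ^ α) ∂μ < ⊤

/-- The Wasserstein-type distance `W^α` (for `α ≥ 1` one takes the `1/α`-th power of the
infimal cost). -/
def Walpha (α : ℝ) (μ ν : Measure (SpecialLinearGroup (Fin d) 𝕂)) : ℝ≥0∞ :=
  (transportCost (fun A B : SpecialLinearGroup (Fin d) 𝕂 =>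
    ‖((A : Matrix (Fin d) (Fin d) 𝕂)) - (B : Matrix (Fin d) (Fin d) 𝕂)‖ ^ α) μ ν) ^
      (1 / max α 1)

/-- Membership in `𝒫^p_log` for measures on a matrix space. -/
def MemPlogMat {ι : Type*} [Fintype ι] (p : ℝ) (μ : Measure (Matrix ι ι 𝕂)) : Prop :=
  IsProbabilityMeasure μ ∧ ∫⁻ M, ENNReal.ofReal (logpStar p ‖M‖) ∂μ < ⊤

/-- The logarithmic Wasserstein distance `W^p_log` on measures on a matrix space. -/
def WlogMat {ι : Type*} [Fintype ι] (p : ℝ) (μ ν : Measure (Matrix ι ι 𝕂)) : ℝ≥0∞ :=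
  transportCost (fun A B => logpStar p ‖A - B‖) μ ν

/-- The pushforward of a measure on `SL_d(𝕂)` under the second exterior power. -/
def wedgePush (μ : Measure (SpecialLinearGroup (Fin d) 𝕂)) :
    Measure (Matrix (PairIdx d) (PairIdx d) 𝕂) :=
  μ.map fun g : SpecialLinearGroup (Fin d) 𝕂 => wedge2 ((g : SpecialLinearGroup (Fin d) 𝕂) : Matrix (Fin d) (Fin d) 𝕂)

/-- `σ ≥ 0` is the standard deviation in the Benoist–Quint central limit theorem for `μ`:
`(log‖A_n^μ‖ - n λ₁(μ))/√n` converges in distribution to `N(0, σ²)`. -/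
def IsCLTStdDev (μ : Measure (SpecialLinearGroup (Fin d) 𝕂)) (σ : ℝ) : Prop :=
  0 ≤ σ ∧ ∀ f : ℝ → ℝ, Continuous f → (∃ M, ∀ x, |f x| ≤ M) →
    Tendsto (fun n : ℕ =>
        ∫ ω, f ((Real.log ‖((prodTM ω : SpecialLinearGroup (Fin d) 𝕂) :
            Matrix (Fin d) (Fin d) 𝕂)‖ - (n : ℝ) * lyap1 μ) / Real.sqrt n)
          ∂(Measure.pi fun _ : Fin n => μ)) atTop
      (nhds (∫ x, f x ∂(ProbabilityTheory.gaussianReal 0 (Real.toNNReal (σ ^ 2)))))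


/-! ### Comparison of the logarithmic and semi-logarithmic gauges -/

lemma logpStar_le {t : ℝ} (ht : 0 ≤ t) : logpStar 1 t ≤ Real.log (1 + t) := by
  unfold logpStar
  have he := Real.exp_pos 1
  split_ifs with h
  · -- On `[0, e]` the chord `t / e` lies below the concave function `log (1 + t)`.
    have hl : 1 ≤ Real.log (1 + Real.exp 1) := by
      rw [Real.le_log_iff_exp_le (by positivity)]; linarith
    have hc := strictConcaveOn_log_Ioi.concaveOn.2
      (show (1 : ℝ) ∈ Set.Ioi 0 by simp)
      (show 1 + Real.exp 1 ∈ Set.Ioi (0 : ℝ) by simp; positivity)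
      (show 0 ≤ 1 - t / Real.exp 1 by
        rw [sub_nonneg, div_le_one he]; exact h.le)
      (show 0 ≤ t / Real.exp 1 by positivity) (by ring)
    simp only [smul_eq_mul, Real.log_one, mul_zero, zero_add] at hc
    have e1 : (1 - t / Real.exp 1) * 1 + t / Real.exp 1 * (1 + Real.exp 1) = 1 + t := by
      field_simp; ring
    rw [e1] at hc
    rw [Real.rpow_one]
    calc 1 / Real.exp 1 * t = t / Real.exp 1 * 1 := by ring
      _ ≤ t / Real.exp 1 * Real.log (1 + Real.exp 1) := by gcongr
      _ ≤ _ := hc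
  · rw [Real.rpow_one]
    have : 0 < t := lt_of_lt_of_le he (not_lt.1 h)
    exact Real.log_le_log this (by linarith)

lemma log_one_add_add_le {x y : ℝ} (hx : 0 ≤ x) (hy : 0 ≤ y) :
    Real.log (1 + (x + y)) ≤ Real.log (1 + x) + Real.log (1 + y) := by
  rw [← Real.log_mul (by positivity) (by positivity)]
  exact Real.log_le_log (by positivity) (by nlinarith [mul_nonneg hx hy])

lemma log_one_add_mul_le {x y : ℝ} (hx : 0 ≤ x) (hy : 0 ≤ y) :
    Real.log (1 + x * y) ≤ Real.log (1 + x) + Real.log (1 + y) := by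
  rw [← Real.log_mul (by positivity) (by positivity)]
  exact Real.log_le_log (by positivity) (by nlinarith)

lemma log_one_add_nat_mul_le (n : ℕ) {x : ℝ} (hx : 0 ≤ x) :
    Real.log (1 + n * x) ≤ n * Real.log (1 + x) := by
  rw [← Real.log_pow]
  exact Real.log_le_log (by positivity) (one_add_mul_le_pow (by linarith) n)

lemma log_one_add_mono {x y : ℝ} (hx : 0 ≤ x) (h : x ≤ y) :
    Real.log (1 + x) ≤ Real.log (1 + y) :=
  Real.log_le_log (by positivity) (by linarith)

lemma slog_nonneg {δ : ℝ} {s : ℝ → ℝ} (hs : IsSlog δ s) {t : ℝ} (ht : 0 ≤ t) : 0 ≤ s t := by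
  rw [← hs.zero]
  exact hs.mono (by simp) ht ht

lemma exists_log_le_slog {δ : ℝ} (hδ : 0 < δ) {s : ℝ → ℝ} (hs : IsSlog δ s) :
    ∃ c : ℝ, 0 < c ∧ ∀ t, 0 ≤ t → Real.log (1 + t) ≤ c * s t := by
  obtain ⟨T, hT⟩ := hs.eventually_eq
  have h1 : ∀ᶠ t : ℝ in atTop, 2 * Real.log t ≤ Real.exp (Real.log t ^ δ) := by
    have hlim : Tendsto (fun t : ℝ => Real.log t ^ δ) atTop atTop :=
      (tendsto_rpow_atTop hδ).comp Real.tendsto_log_atTop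
    -- With `v = (log t) ^ δ` this is `2 v ^ (1 / δ) ≤ exp v`.
    have h := hlim.eventually
      ((isLittleO_rpow_exp_atTop (1 / δ)).bound (show (0 : ℝ) < 1 / 2 by norm_num))
    filter_upwards [h, eventually_ge_atTop (1 : ℝ)] with t ht ht1
    have hl := Real.log_nonneg ht1
    rw [← Real.rpow_mul hl, mul_one_div_cancel hδ.ne', Real.rpow_one, Real.norm_eq_abs,
      Real.norm_eq_abs, abs_of_nonneg hl, abs_of_pos (Real.exp_pos _)] at ht
    linarith
  obtain ⟨S, hS⟩ := eventually_atTop.1 h1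
  set R := max (max T S) 2 with hR
  have hR2 : 2 ≤ R := le_max_right _ _
  have hRT : T ≤ R := (le_max_left _ _).trans (le_max_left _ _)
  have hRS : S ≤ R := (le_max_right _ _).trans (le_max_left _ _)
  have hsR : 0 < s R := by rw [hT R hRT]; exact Real.exp_pos _
  refine ⟨1 + R / s R, by positivity, fun t ht => ?_⟩
  have hst := slog_nonneg hs ht
  rcases le_total R t with h | h
  · have a1 : Real.log (1 + t) ≤ 2 * Real.log t := by
      have : 2 * Real.log t = Real.log (t ^ 2) := by rw [Real.log_pow]; norm_num
      rw [this]
      exact Real.log_le_log (by linarith) (by nlinarith)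
    have a2 := hS t (hRS.trans h)
    rw [← hT t (hRT.trans h)] at a2
    have : 0 ≤ R / s R * s t := by positivity
    linarith
  · -- Concavity and `s 0 = 0` put the chord `(t / R) s R` below `s t`.
    have hc := hs.concave.2 (show (0 : ℝ) ∈ Set.Ici 0 by simp)
      (show R ∈ Set.Ici (0 : ℝ) by simp; linarith)
      (show 0 ≤ 1 - t / R by rw [sub_nonneg, div_le_one (by linarith)]; exact h)
      (show 0 ≤ t / R by positivity) (by ring)
    simp only [smul_eq_mul, hs.zero, mul_zero, zero_add] at hc
    rw [div_mul_cancel₀ t (by linarith : R ≠ 0)] at hc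
    have a1 : Real.log (1 + t) ≤ t := by
      have := Real.log_le_sub_one_of_pos (show 0 < 1 + t by linarith)
      linarith
    have a2 : t ≤ R / s R * s t := by
      calc t = R / s R * (t / R * s R) := by field_simp
        _ ≤ _ := by gcongr
    linarith

/-! ### Norm estimates for the second exterior power -/

lemma norm_wedge2_sub_le (A B : Matrix (Fin d) (Fin d) 𝕂) :
    ‖wedge2 A - wedge2 B‖ ≤ 2 * (‖A - B‖ * ‖A - B‖) + 4 * (‖B‖ * ‖A - B‖) := by
  have hmul : ∀ i j k l : Fin d, ‖A i j * A k l - B i j * B k l‖ ≤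
      ‖A - B‖ * ‖A - B‖ + 2 * (‖B‖ * ‖A - B‖) := by
    intro i j k l
    have h1 : ‖A i j - B i j‖ ≤ ‖A - B‖ := Matrix.norm_entry_le_entrywise_sup_norm (A - B)
    have h2 : ‖A k l - B k l‖ ≤ ‖A - B‖ := Matrix.norm_entry_le_entrywise_sup_norm (A - B)
    have h3 : ‖B i j‖ ≤ ‖B‖ := Matrix.norm_entry_le_entrywise_sup_norm B
    have h4 : ‖B k l‖ ≤ ‖B‖ := Matrix.norm_entry_le_entrywise_sup_norm B
    have e : A i j * A k l - B i j * B k l = (A i j - B i j) * (A k l - B k l)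
        + (A i j - B i j) * B k l + B i j * (A k l - B k l) := by ring
    rw [e]
    refine (norm_add₃_le).trans ?_
    rw [norm_mul, norm_mul, norm_mul]
    calc _ ≤ ‖A - B‖ * ‖A - B‖ + ‖A - B‖ * ‖B‖ + ‖B‖ * ‖A - B‖ := by gcongr
      _ = _ := by ring
  rw [Matrix.norm_le_iff (by positivity)]
  intro p q
  have e : (wedge2 A - wedge2 B) p q =
      (A p.1.1 q.1.1 * A p.1.2 q.1.2 - B p.1.1 q.1.1 * B p.1.2 q.1.2)
      - (A p.1.1 q.1.2 * A p.1.2 q.1.1 - B p.1.1 q.1.2 * B p.1.2 q.1.1) := by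
    simp only [wedge2, Matrix.sub_apply]; ring
  rw [e]
  refine (norm_sub_le _ _).trans ?_
  linarith [hmul p.1.1 q.1.1 p.1.2 q.1.2, hmul p.1.1 q.1.2 p.1.2 q.1.1]

lemma log_norm_wedge2_sub_le (A B : Matrix (Fin d) (Fin d) 𝕂) :
    logpStar 1 ‖wedge2 A - wedge2 B‖ ≤
      4 * Real.log (1 + ‖A - B‖) + 4 * Real.log (1 + ‖B‖ * ‖A - B‖) := by
  set t := ‖A - B‖ with ht
  set b := ‖B‖ with hb
  have ht0 : 0 ≤ t := norm_nonneg _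
  have hb0 : 0 ≤ b := norm_nonneg _
  refine (logpStar_le (norm_nonneg _)).trans ?_
  refine (log_one_add_mono (norm_nonneg _) (norm_wedge2_sub_le A B)).trans ?_
  refine (log_one_add_add_le (by positivity) (by positivity)).trans ?_
  have h1 := log_one_add_nat_mul_le 2 (show 0 ≤ t * t by positivity)
  have h2 := log_one_add_nat_mul_le 4 (show 0 ≤ b * t by positivity)
  have h3 := log_one_add_mul_le ht0 ht0
  push_cast at h1 h2
  linarith

lemma logpStar_norm_wedge2_le (A : Matrix (Fin d) (Fin d) 𝕂) :
    logpStar 1 ‖wedge2 A‖ ≤ 4 * Real.log (1 + ‖A‖) := by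
  have h0 : wedge2 (0 : Matrix (Fin d) (Fin d) 𝕂) = 0 := by
    ext p q; simp [wedge2]
  have h := log_norm_wedge2_sub_le A 0
  simpa [h0] using h

/-- The pointwise estimate behind continuity: where `‖B‖ ≤ n` the cost is controlled by the
semi-logarithmic cost alone, and elsewhere the excess depends on `B` only. -/
lemma logpStar_wedge2_sub_le {s : ℝ → ℝ} {c : ℝ}
    (hc : ∀ t, 0 ≤ t → Real.log (1 + t) ≤ c * s t) (n : ℕ) (A B : Matrix (Fin d) (Fin d) 𝕂) :
    logpStar 1 ‖wedge2 A - wedge2 B‖ ≤ (8 + 4 * n) * c * s ‖A - B‖ +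
      (if (n : ℝ) < ‖B‖ then 4 * Real.log (1 + ‖B‖) else 0) := by
  have h := log_norm_wedge2_sub_le A B
  have ht := hc ‖A - B‖ (norm_nonneg _)
  have hg : 0 ≤ Real.log (1 + ‖A - B‖) :=
    Real.log_nonneg (by linarith [norm_nonneg (A - B)])
  have hn : (0 : ℝ) ≤ n := Nat.cast_nonneg n
  have hK : (8 + 4 * n) * Real.log (1 + ‖A - B‖) ≤ (8 + 4 * n) * c * s ‖A - B‖ := by
    rw [mul_assoc]; gcongr
  have hng : 0 ≤ n * Real.log (1 + ‖A - B‖) := by positivity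
  split_ifs with hB
  · have h2 := log_one_add_mul_le (norm_nonneg B) (norm_nonneg (A - B))
    linarith
  · have h2 : Real.log (1 + ‖B‖ * ‖A - B‖) ≤ n * Real.log (1 + ‖A - B‖) :=
      (log_one_add_mono (by positivity) (by gcongr; exact not_lt.1 hB)).trans
        (log_one_add_nat_mul_le n (norm_nonneg _))
    linarith

/-! ### Measurability and integration over couplings -/

local instance matBS {ι : Type*} [Fintype ι] : BorelSpace (Matrix ι ι 𝕂) := ⟨rfl⟩
local instance slBS : BorelSpace (SpecialLinearGroup (Fin d) 𝕂) := ⟨rfl⟩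

lemma continuous_slCoe : Continuous
    (fun g : SpecialLinearGroup (Fin d) 𝕂 => (g : Matrix (Fin d) (Fin d) 𝕂)) :=
  continuous_subtype_val

lemma measurable_slNorm : Measurable
    (fun g : SpecialLinearGroup (Fin d) 𝕂 => ‖(g : Matrix (Fin d) (Fin d) 𝕂)‖) :=
  (continuous_norm.comp continuous_slCoe).measurable

lemma measurable_wedge2 : Measurable
    (fun g : SpecialLinearGroup (Fin d) 𝕂 => wedge2 (g : Matrix (Fin d) (Fin d) 𝕂)) := by
  have he : ∀ i j : Fin d, Continuous
      (fun g : SpecialLinearGroup (Fin d) 𝕂 => (g : Matrix (Fin d) (Fin d) 𝕂) i j) :=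
    fun i j => continuous_slCoe.matrix_elem i j
  refine Continuous.measurable (continuous_matrix fun p q => ?_)
  exact ((he _ _).mul (he _ _)).sub ((he _ _).mul (he _ _))

lemma lintegral_log_lt_top {s : ℝ → ℝ} {c : ℝ} (hc0 : 0 < c)
    (hc : ∀ t, 0 ≤ t → Real.log (1 + t) ≤ c * s t)
    {μ : Measure (SpecialLinearGroup (Fin d) 𝕂)} (hμ : MemPslog s μ) :
    ∫⁻ M, ENNReal.ofReal (4 * Real.log (1 + ‖(M : Matrix (Fin d) (Fin d) 𝕂)‖)) ∂μ < ⊤ := by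
  calc _ ≤ ∫⁻ M, ENNReal.ofReal (4 * c) *
          ENNReal.ofReal (s ‖(M : Matrix (Fin d) (Fin d) 𝕂)‖) ∂μ := by
        refine lintegral_mono fun M => ?_
        rw [← ENNReal.ofReal_mul (by positivity)]
        refine ENNReal.ofReal_le_ofReal ?_
        have := hc ‖(M : Matrix (Fin d) (Fin d) 𝕂)‖ (norm_nonneg _)
        linarith
    _ = ENNReal.ofReal (4 * c) *
          ∫⁻ M, ENNReal.ofReal (s ‖(M : Matrix (Fin d) (Fin d) 𝕂)‖) ∂μ :=
        lintegral_const_mul' _ _ ENNReal.ofReal_ne_top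
    _ < ⊤ := ENNReal.mul_lt_top ENNReal.ofReal_lt_top hμ.2

lemma memPlogMat_wedgePush {s : ℝ → ℝ} {c : ℝ} (hc0 : 0 < c)
    (hc : ∀ t, 0 ≤ t → Real.log (1 + t) ≤ c * s t)
    {μ : Measure (SpecialLinearGroup (Fin d) 𝕂)} (hμ : MemPslog s μ) :
    MemPlogMat 1 (wedgePush μ) := by
  have := hμ.1
  refine ⟨Measure.isProbabilityMeasure_map measurable_wedge2.aemeasurable, ?_⟩
  refine lt_of_le_of_lt ((lintegral_map_le _ _).trans ?_) (lintegral_log_lt_top hc0 hc hμ)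
  exact lintegral_mono fun M => ENNReal.ofReal_le_ofReal (logpStar_norm_wedge2_le _)

/-- The part beyond radius `n` of the integral `∫ 4 log (1 + ‖M‖) dμ(M)`. -/
def logTail (μ : Measure (SpecialLinearGroup (Fin d) 𝕂)) (n : ℕ) : ℝ≥0∞ :=
  ∫⁻ M, ENNReal.ofReal (if (n : ℝ) < ‖(M : Matrix (Fin d) (Fin d) 𝕂)‖ then
    4 * Real.log (1 + ‖(M : Matrix (Fin d) (Fin d) 𝕂)‖) else 0) ∂μ

lemma measurable_logTail_integrand (n : ℕ) : Measurable
    (fun M : SpecialLinearGroup (Fin d) 𝕂 =>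
      ENNReal.ofReal (if (n : ℝ) < ‖(M : Matrix (Fin d) (Fin d) 𝕂)‖ then
        4 * Real.log (1 + ‖(M : Matrix (Fin d) (Fin d) 𝕂)‖) else 0)) := by
  refine ENNReal.measurable_ofReal.comp (Measurable.ite ?_ ?_ measurable_const)
  · exact measurableSet_lt measurable_const measurable_slNorm
  · exact (Real.measurable_log.comp (measurable_slNorm.const_add 1)).const_mul 4

lemma tendsto_logTail {μ : Measure (SpecialLinearGroup (Fin d) 𝕂)}
    (hμ : ∫⁻ M, ENNReal.ofReal (4 * Real.log (1 + ‖(M : Matrix (Fin d) (Fin d) 𝕂)‖)) ∂μ < ⊤) :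
    Tendsto (logTail μ) atTop (𝓝 0) := by
  rw [← lintegral_zero (μ := μ)]
  refine tendsto_lintegral_of_dominated_convergence _ measurable_logTail_integrand
    (fun n => Eventually.of_forall fun M => ?_) hμ.ne (Eventually.of_forall fun M => ?_)
  · refine ENNReal.ofReal_le_ofReal ?_
    split_ifs
    · exact le_rfl
    · have := Real.log_nonneg
        (show 1 ≤ 1 + ‖(M : Matrix (Fin d) (Fin d) 𝕂)‖ by
          linarith [norm_nonneg (M : Matrix (Fin d) (Fin d) 𝕂)])
      linarith
  · refine tendsto_const_nhds.congr' ?_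
    filter_upwards [eventually_ge_atTop ⌈‖(M : Matrix (Fin d) (Fin d) 𝕂)‖⌉₊] with n hn
    rw [if_neg (not_lt.2 (Nat.ceil_le.1 hn)), ENNReal.ofReal_zero]

/-- Pushing an arbitrary coupling forward by `∧² × ∧²` bounds the distance of the pushforwards. -/
lemma WlogMat_wedgePush_le {s : ℝ → ℝ} {c : ℝ} (hc0 : 0 < c)
    (hc : ∀ t, 0 ≤ t → Real.log (1 + t) ≤ c * s t) (n : ℕ)
    (ν μ : Measure (SpecialLinearGroup (Fin d) 𝕂)) :
    WlogMat 1 (wedgePush ν) (wedgePush μ) ≤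
      ENNReal.ofReal ((8 + 4 * n) * c) * Wslog s ν μ + logTail μ n := by
  have hK : 0 < (8 + 4 * (n : ℝ)) * c := by positivity
  have hK0 : ENNReal.ofReal ((8 + 4 * n) * c) ≠ 0 := by simpa using hK
  unfold Wslog transportCost
  simp only [ENNReal.mul_iInf_of_ne hK0 ENNReal.ofReal_ne_top, ENNReal.iInf_add]
  refine le_iInf₂ fun η hη => ?_
  set F := fun g : SpecialLinearGroup (Fin d) 𝕂 => wedge2 (g : Matrix (Fin d) (Fin d) 𝕂) with hF
  have hFm : Measurable F := measurable_wedge2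
  have hm : Measurable (Prod.map F F) := hFm.prodMap hFm
  have hcoup : (η.map (Prod.map F F)).map Prod.fst = wedgePush ν ∧
      (η.map (Prod.map F F)).map Prod.snd = wedgePush μ := by
    constructor
    · rw [Measure.map_map measurable_fst hm, wedgePush, ← hη.1,
        Measure.map_map hFm measurable_fst]
      rfl
    · rw [Measure.map_map measurable_snd hm, wedgePush, ← hη.2,
        Measure.map_map hFm measurable_snd]
      rfl
  refine (iInf₂_le (η.map (Prod.map F F)) hcoup).trans ?_
  refine (lintegral_map_le _ _).trans ?_
  have htail := measurable_logTail_integrand (𝕂 := 𝕂) (d := d) n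
  rw [logTail, ← hη.2, lintegral_map htail measurable_snd,
    ← lintegral_const_mul' _ _ ENNReal.ofReal_ne_top]
  refine le_of_le_of_eq ?_ (lintegral_add_right _ (htail.comp measurable_snd))
  refine lintegral_mono fun q => ?_
  dsimp only
  rw [← ENNReal.ofReal_mul hK.le]
  refine (ENNReal.ofReal_le_ofReal (logpStar_wedge2_sub_le hc n _ _)).trans ?_
  exact ENNReal.ofReal_add_le

/-- **Continuity of the second exterior power pushforward** (Theorem 2.8 of the paper).
For every `δ ∈ (0,1)`, the map `μ ↦ ∧²_*μ` is continuous from `(𝒫^δ_slog(SL_d(𝕂)), W^δ_slog)`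
to `(𝒫¹_log(SL_(d(d-1)/2)(𝕂)), W¹_log)`. -/
theorem wedge_pushforward_continuous {𝕂 : Type*} [NontriviallyNormedField 𝕂] [CompleteSpace 𝕂]
    [LocallyCompactSpace 𝕂] {d : ℕ} (hd : 2 ≤ d) {δ : ℝ} (hδ : δ ∈ Set.Ioo (0 : ℝ) 1)
    (s : ℝ → ℝ) (hs : IsSlog δ s)
    (μ : Measure (SpecialLinearGroup (Fin d) 𝕂)) (hμ : MemPslog s μ)
    (μseq : ℕ → Measure (SpecialLinearGroup (Fin d) 𝕂)) (hseq : ∀ n, MemPslog s (μseq n))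
    (hconv : Tendsto (fun n => Wslog s (μseq n) μ) atTop (nhds 0)) :
    MemPlogMat 1 (wedgePush μ) ∧ (∀ n, MemPlogMat 1 (wedgePush (μseq n))) ∧
      Tendsto (fun n => WlogMat 1 (wedgePush (μseq n)) (wedgePush μ)) atTop (nhds 0) := by
  obtain ⟨c, hc0, hc⟩ := exists_log_le_slog hδ.1 hs
  refine ⟨memPlogMat_wedgePush hc0 hc hμ, fun n => memPlogMat_wedgePush hc0 hc (hseq n), ?_⟩
  rw [ENNReal.tendsto_nhds_zero]
  intro ε hε
  obtain ⟨n, hn⟩ := ((tendsto_logTail (lintegral_log_lt_top hc0 hc hμ)).eventually_lt_const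
    hε).exists
  have hlim : Tendsto (fun k => ENNReal.ofReal ((8 + 4 * n) * c) * Wslog s (μseq k) μ
      + logTail μ n) atTop (𝓝 (logTail μ n)) := by
    have h := (ENNReal.Tendsto.const_mul hconv
      (Or.inr (ENNReal.ofReal_ne_top (r := (8 + 4 * n) * c)))).add_const (logTail μ n)
    simpa using h
  filter_upwards [hlim.eventually_lt_const hn] with k hk
  exact (WlogMat_wedgePush_le hc0 hc n _ _).trans hk.le

end RMP

end
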